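/- For all natural numbers k and t with t ≥ 2^k: every play of the reversible pebble game on t nodes that contains some configuration in which a node with index at least 2^k is pebbled must contain some configuration with more than k pebbles (i.e., with at least k+1 pebbled nodes). -/

import Mathlib

/- Bennett's reversible pebble game on `t` nodes numbered `1, …, t`.
A configuration is a finite set `P` of pebbled node indices (a subset of
`{1, …, t}`).  A legal move toggles the pebbled status of exactly one node
`j` with `1 ≤ j ≤ t`, provided `j = 1` or node `j - 1` is pebbled. -/
def PebbleMove (t : ℕ) (P P' : Finset ℕ) : Prop :=
  ∃ j : ℕ, 1 ≤ j ∧ j ≤ t ∧ (j = 1 ∨ j - 1 ∈ P) ∧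
    P' = (if j ∈ P then P.erase j else insert j P)

/-- A play is a finite sequence of configurations beginning with the empty
configuration, each consecutive pair related by a legal move. -/
def PebblePlay (t : ℕ) (L : List (Finset ℕ)) : Prop :=
  L.head? = some ∅ ∧ L.Chain' (PebbleMove t)

/-!
Cut the line after node `N = 2 ^ k` and suppose a play never uses more than `k + 1` pebbles. The
first pebble above `N` is placed while `N` is pebbled, so by induction the part of the configuration
up to `N` is then not reachable with `k` pebbles. While some pebble stays above `N`, at most `k`
pebbles are left for the nodes up to `N`; as moves are reversible, the part up to `N` stays
unreachable with `k` pebbles, and in particular nonempty. So the part above `N` is itself played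
with at most `k` pebbles, and by induction it never gets to node `2 * N`.
-/

section PebbleReachable

open scoped symmDiff

variable {k t N : ℕ} {P P' : Finset ℕ}

theorem pebbleMove_iff_symmDiff :
    PebbleMove t P P' ↔ ∃ j, 1 ≤ j ∧ j ≤ t ∧ (j = 1 ∨ j - 1 ∈ P) ∧ P' = P ∆ {j} := by
  have toggle_eq (j : ℕ) : (if j ∈ P then P.erase j else insert j P) = P ∆ {j} := by
    ext i
    split_ifs <;> grind [Finset.mem_symmDiff]
  simp only [PebbleMove, toggle_eq]

theorem PebbleMove.symm (h : PebbleMove t P P') : PebbleMove t P' P := by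
  rw [pebbleMove_iff_symmDiff] at h ⊢
  obtain ⟨j, one_le, le_t, legal, rfl⟩ := h
  refine ⟨j, one_le, le_t, legal.imp_right fun pred_mem => ?_,
    (symmDiff_symmDiff_cancel_right _ _).symm⟩
  have pred_ne : j - 1 ≠ j := by omega
  simp [Finset.mem_symmDiff, pred_mem, pred_ne]

/-- The restriction of the configuration `P` to the nodes with index at most `N`. -/
def pebblesUpTo (N : ℕ) (P : Finset ℕ) : Finset ℕ :=
  {i ∈ P | i ≤ N}

/-- The restriction of the configuration `P` to the nodes with index greater than `N`, renumbered
so that node `N + 1` becomes node `1`; it is again a configuration of the pebble game. -/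
def pebblesAbove (N : ℕ) (P : Finset ℕ) : Finset ℕ :=
  {i ∈ P | N < i}.image (· - N)

theorem mem_pebblesUpTo {i : ℕ} : i ∈ pebblesUpTo N P ↔ i ∈ P ∧ i ≤ N :=
  Finset.mem_filter

theorem mem_pebblesAbove {i : ℕ} : i ∈ pebblesAbove N P ↔ 1 ≤ i ∧ i + N ∈ P := by
  simp only [pebblesAbove, Finset.mem_image, Finset.mem_filter]
  constructor
  · rintro ⟨a, ⟨a_mem, lt_a⟩, rfl⟩
    exact ⟨by omega, by rwa [Nat.sub_add_cancel lt_a.le]⟩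
  · rintro ⟨one_le, mem⟩
    exact ⟨i + N, ⟨mem, by omega⟩, by omega⟩

theorem sub_mem_pebblesAbove {i : ℕ} (hi : i ∈ P) (hN : N < i) : i - N ∈ pebblesAbove N P :=
  mem_pebblesAbove.2 ⟨by omega, by rwa [Nat.sub_add_cancel hN.le]⟩

theorem card_pebblesUpTo_add_card_pebblesAbove (N : ℕ) (P : Finset ℕ) :
    (pebblesUpTo N P).card + (pebblesAbove N P).card = P.card := by
  have sub_injOn : Set.InjOn (· - N) ({i ∈ P | N < i} : Finset ℕ) := by
    intro a ha b hb hab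
    simp only [SetLike.mem_coe, Finset.mem_filter] at ha hb hab
    omega
  rw [pebblesAbove, Finset.card_image_of_injOn sub_injOn, pebblesUpTo]
  simpa only [not_le] using P.card_filter_add_card_filter_not (· ≤ N)

theorem card_pebblesUpTo_le (hP : P.card ≤ k + 1) (h : (pebblesAbove N P).Nonempty) :
    (pebblesUpTo N P).card ≤ k := by
  have := card_pebblesUpTo_add_card_pebblesAbove N P
  have := h.card_pos
  omega

theorem card_pebblesAbove_le (hP : P.card ≤ k + 1) (h : (pebblesUpTo N P).Nonempty) :
    (pebblesAbove N P).card ≤ k := by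
  have := card_pebblesUpTo_add_card_pebblesAbove N P
  have := h.card_pos
  omega

theorem pebblesUpTo_symmDiff_of_le {j : ℕ} (hj : j ≤ N) :
    pebblesUpTo N (P ∆ {j}) = pebblesUpTo N P ∆ {j} := by
  ext i
  grind [mem_pebblesUpTo, Finset.mem_symmDiff]

theorem pebblesUpTo_symmDiff_of_lt {j : ℕ} (hj : N < j) :
    pebblesUpTo N (P ∆ {j}) = pebblesUpTo N P := by
  ext i
  grind [mem_pebblesUpTo, Finset.mem_symmDiff]

theorem pebblesAbove_symmDiff_of_le {j : ℕ} (hj : j ≤ N) :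
    pebblesAbove N (P ∆ {j}) = pebblesAbove N P := by
  ext i
  grind [mem_pebblesAbove, Finset.mem_symmDiff]

theorem pebblesAbove_symmDiff_of_lt {j : ℕ} (hj : N < j) :
    pebblesAbove N (P ∆ {j}) = pebblesAbove N P ∆ {j - N} := by
  ext i
  grind [mem_pebblesAbove, Finset.mem_symmDiff]

theorem PebbleMove.upTo_or_above (hN : 1 ≤ N) (h : PebbleMove t P P') :
    (PebbleMove t (pebblesUpTo N P) (pebblesUpTo N P') ∧
      pebblesAbove N P' = pebblesAbove N P) ∨
    (PebbleMove t (pebblesAbove N P) (pebblesAbove N P') ∧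
      pebblesUpTo N P' = pebblesUpTo N P ∧ (N ∈ P ∨ (pebblesAbove N P).Nonempty)) := by
  simp only [pebbleMove_iff_symmDiff] at h ⊢
  obtain ⟨j, one_le, le_t, legal, rfl⟩ := h
  rcases le_or_gt j N with j_le | lt_j
  · refine .inl ⟨⟨j, one_le, le_t, legal.imp_right fun pred_mem => ?_,
      pebblesUpTo_symmDiff_of_le j_le⟩, pebblesAbove_symmDiff_of_le j_le⟩
    exact mem_pebblesUpTo.2 ⟨pred_mem, by omega⟩
  · have pred_mem : j - 1 ∈ P := legal.resolve_left (by omega)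
    have eq_or_pred_mem_above : j = N + 1 ∨ j - N - 1 ∈ pebblesAbove N P := by
      refine or_iff_not_imp_left.2 fun j_ne => ?_
      rw [Nat.sub_right_comm]
      exact sub_mem_pebblesAbove pred_mem (by omega)
    refine .inr ⟨⟨j - N, by omega, by omega, eq_or_pred_mem_above.imp_left (by omega),
      pebblesAbove_symmDiff_of_lt lt_j⟩, pebblesUpTo_symmDiff_of_lt lt_j, ?_⟩
    exact eq_or_pred_mem_above.imp (fun j_eq => by simpa [j_eq] using pred_mem) (⟨_, ·⟩)

/-- A legal move between two configurations of at most `k` pebbles. Bounding both ends makes the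
relation symmetric. -/
def BoundedPebbleMove (t k : ℕ) (P P' : Finset ℕ) : Prop :=
  PebbleMove t P P' ∧ P.card ≤ k ∧ P'.card ≤ k

theorem BoundedPebbleMove.symm (h : BoundedPebbleMove t k P P') : BoundedPebbleMove t k P' P :=
  ⟨h.1.symm, h.2.2, h.2.1⟩

/-- The configuration `P` occurs in some play on `t` nodes that never uses more than `k` pebbles. -/
def PebbleReachable (t k : ℕ) (P : Finset ℕ) : Prop :=
  Relation.ReflTransGen (BoundedPebbleMove t k) ∅ P

theorem PebbleReachable.empty : PebbleReachable t k ∅ :=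
  .refl

theorem PebbleReachable.card_le (h : PebbleReachable t k P) : P.card ≤ k := by
  cases h with
  | refl => simp
  | tail _ move => exact move.2.2

theorem nonempty_of_not_pebbleReachable (h : ¬PebbleReachable t k P) : P.Nonempty :=
  Finset.nonempty_iff_ne_empty.2 fun P_eq => h (P_eq ▸ .empty)

theorem PebblePlay.pebbleReachable {L : List (Finset ℕ)} (hL : PebblePlay t L)
    (hk : ∀ P ∈ L, P.card ≤ k) : ∀ P ∈ L, PebbleReachable t k P := by
  obtain ⟨head_eq, chain⟩ := hL
  have bounded_chain : L.IsChain (BoundedPebbleMove t k) :=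
    chain.imp_of_mem_imp fun P P' hP hP' move => ⟨move, hk P hP, hk P' hP'⟩
  refine bounded_chain.induction _ _ (fun _ _ move reach => reach.tail move) fun L_ne => ?_
  rw [List.head?_eq_some_head L_ne, Option.some.injEq] at head_eq
  exact head_eq ▸ .empty

theorem PebbleReachable.pebblesAbove_eq_empty_or (hN : 1 ≤ N)
    (hk : ∀ Q, PebbleReachable t k Q → ∀ j ∈ Q, j < N) (h : PebbleReachable t (k + 1) P) :
    pebblesAbove N P = ∅ ∨
      (¬PebbleReachable t k (pebblesUpTo N P) ∧ PebbleReachable t k (pebblesAbove N P)) := by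
  induction h with
  | refl => exact .inl rfl
  | @tail P P' _ bounded_move ih =>
    obtain ⟨move, card_le, card_le'⟩ := bounded_move
    rcases move.upTo_or_above hN with ⟨move_upTo, above_eq⟩ | ⟨move_above, upTo_eq, mem_or_nonempty⟩
    · rw [above_eq]
      rcases (pebblesAbove N P).eq_empty_or_nonempty with above_empty | above_nonempty
      · exact .inl above_empty
      obtain ⟨upTo_not_reachable, above_reachable⟩ := ih.resolve_left above_nonempty.ne_empty
      have bounded_move_upTo : BoundedPebbleMove t k (pebblesUpTo N P) (pebblesUpTo N P') :=
        ⟨move_upTo, card_pebblesUpTo_le card_le above_nonempty,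
          card_pebblesUpTo_le card_le' (above_eq ▸ above_nonempty)⟩
      exact .inr ⟨fun reach => upTo_not_reachable (reach.tail bounded_move_upTo.symm),
        above_reachable⟩
    · have invariant : ¬PebbleReachable t k (pebblesUpTo N P) ∧
          PebbleReachable t k (pebblesAbove N P) := by
        rcases ih with above_empty | invariant
        · have N_mem : N ∈ P := mem_or_nonempty.resolve_right (by simp [above_empty])
          refine ⟨fun reach => ?_, above_empty ▸ .empty⟩
          exact (hk _ reach N (mem_pebblesUpTo.2 ⟨N_mem, le_rfl⟩)).false
        · exact invariant
      obtain ⟨upTo_not_reachable, above_reachable⟩ := invariant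
      have upTo_nonempty := nonempty_of_not_pebbleReachable upTo_not_reachable
      refine .inr ⟨upTo_eq ▸ upTo_not_reachable, above_reachable.tail ⟨move_above, ?_, ?_⟩⟩
      · exact card_pebblesAbove_le card_le upTo_nonempty
      · exact card_pebblesAbove_le card_le' (upTo_eq ▸ upTo_nonempty)

theorem PebbleReachable.lt_two_pow (h : PebbleReachable t k P) : ∀ j ∈ P, j < 2 ^ k := by
  induction k generalizing P with
  | zero => simp [Finset.card_eq_zero.1 (Nat.le_zero.1 h.card_le)]
  | succ k ih =>
    intro j hj
    rw [pow_succ, mul_two]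
    rcases le_or_gt j (2 ^ k) with j_le | lt_j
    · have := Nat.two_pow_pos k
      omega
    · have sub_mem := sub_mem_pebblesAbove hj lt_j
      have above_reachable : PebbleReachable t k (pebblesAbove (2 ^ k) P) :=
        ((h.pebblesAbove_eq_empty_or Nat.one_le_two_pow fun _ => ih).resolve_left
          (Finset.ne_empty_of_mem sub_mem)).2
      have := ih above_reachable _ sub_mem
      omega

end PebbleReachable

/-- Every play of the reversible pebble game on `t ≥ 2 ^ k` nodes containing a
configuration in which some node with index at least `2 ^ k` is pebbled must
contain a configuration with at least `k + 1` pebbled nodes. -/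
theorem pebble_game_space_lower_bound (k t : ℕ) (ht : 2 ^ k ≤ t)
    (L : List (Finset ℕ)) (hL : PebblePlay t L)
    (hreach : ∃ P ∈ L, ∃ j ∈ P, 2 ^ k ≤ j) :
    ∃ P ∈ L, k + 1 ≤ P.card := by
  by_contra! card_lt
  obtain ⟨P, hP, j, hj, two_pow_le⟩ := hreach
  have reachable : PebbleReachable t k P :=
    hL.pebbleReachable (fun Q hQ => Nat.lt_succ_iff.1 (card_lt Q hQ)) P hP
  exact (reachable.lt_two_pow j hj).not_ge two_pow_le
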